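/- The function τ(c) = −(2c−3)/(2c·(log c)²) + 1/(c(1−c)·log c) + c/(2(1−c)²), extended continuously at c = 1, is concave on (0,∞); consequently for fixed a > b > 0 and λ > 0 the function x ↦ τ((a−x)/λ) + τ((b+x)/λ) is increasing on [0, (a−b)/2]. -/

import Mathlib

noncomputable def tau (c : ℝ) : ℝ :=
  -(2 * c - 3) / (2 * c * (Real.log c) ^ 2) + 1 / (c * (1 - c) * Real.log c) +
    c / (2 * (1 - c) ^ 2)

/-!
With `c = exp t`, the second derivative of `τ` is a positive factor times an exponential polynomial
`Q t = ∑ k, p k t * exp (k * t)` whose coefficients are integers. To see that `Q ≤ 0` on `[0, ∞)`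
it suffices that `Q 0 ≤ 0` and `Q' - k * Q ≤ 0` for some `k`; a suitable sequence of such steps
ends in an exponential polynomial without positive coefficients. The half-line `(-∞, 0]` is
treated in the same way after `t ↦ -t`. Hence `τ'' ≤ 0` away from `1`. As `τ` is meromorphic on
`(0, ∞)`, its continuous extension is analytic at `1`, and there the inequality holds by continuity.

The monotonicity holds because `(a - x) / lam` and `(b + x) / lam` approach each other with
constant sum as `x` grows.
-/

open Set Filter Topology

lemma concaveOn_add_le_add_combo {𝕜 E β : Type*} [Semiring 𝕜] [PartialOrder 𝕜]
    [AddCommMonoid E] [AddCommMonoid β] [PartialOrder β] [IsOrderedAddMonoid β] [SMul 𝕜 E]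
    [Module 𝕜 β] {s : Set E} {f : E → β} (hf : ConcaveOn 𝕜 s f) {x y : E} (hx : x ∈ s)
    (hy : y ∈ s) {a b : 𝕜} (ha : 0 ≤ a) (hb : 0 ≤ b) (hab : a + b = 1) :
    f x + f y ≤ f (a • x + b • y) + f (b • x + a • y) := by
  calc
    f x + f y = (a • f x + b • f y) + (b • f x + a • f y) := by
      rw [add_add_add_comm, ← add_smul, add_comm (b • f y), ← add_smul, hab, one_smul, one_smul]
    _ ≤ _ := add_le_add (hf.2 hx hy ha hb hab) (hf.2 hx hy hb ha (by rwa [add_comm]))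

lemma concaveOn_add_le_add_of_add_eq_add {𝕜 β : Type*} [Field 𝕜] [LinearOrder 𝕜]
    [IsStrictOrderedRing 𝕜] [AddCommMonoid β] [PartialOrder β] [IsOrderedAddMonoid β]
    [Module 𝕜 β] {s : Set 𝕜} {f : 𝕜 → β} (hf : ConcaveOn 𝕜 s f) {x y x' y' : 𝕜}
    (hx : x ∈ s) (hy : y ∈ s) (hx' : x' ∈ Icc x y) (h_sum : x' + y' = x + y) :
    f x + f y ≤ f x' + f y' := by
  obtain ⟨a, b, ha, hb, hab, rfl⟩ := (Convex.mem_Icc (hx'.1.trans hx'.2)).1 hx'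
  have hy' : y' = b • x + a • y := by
    simp only [smul_eq_mul]
    linear_combination h_sum - (x + y) * hab
  simpa [hy'] using concaveOn_add_le_add_combo hf hx hy ha hb hab

lemma concaveOn_of_analyticOnNhd_of_deriv2_nonpos_nhdsNE {D : Set ℝ} (hD : Convex ℝ D)
    {f : ℝ → ℝ} (hf : AnalyticOnNhd ℝ f D)
    (hf'' : ∀ x ∈ D, ∃ᶠ y in 𝓝[≠] x, deriv^[2] f y ≤ 0) : ConcaveOn ℝ D f := by
  refine concaveOn_of_deriv2_nonpos' hD hf.differentiableOn hf.deriv.differentiableOn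
    fun x hx => ?_
  have h_cont : Tendsto (deriv^[2] f) (𝓝[≠] x) (𝓝 (deriv^[2] f x)) :=
    (hf.deriv.deriv x hx).continuousAt.tendsto.mono_left nhdsWithin_le_nhds
  exact le_of_tendsto_of_frequently h_cont (hf'' x hx)

lemma nonpos_of_hasDerivAt_of_le_mul {f f' : ℝ → ℝ} {a k : ℝ}
    (hf : ∀ t, a ≤ t → HasDerivAt f (f' t) t) (ha : f a ≤ 0)
    (hf' : ∀ t, a ≤ t → f' t ≤ k * f t) {t : ℝ} (ht : a ≤ t) : f t ≤ 0 := by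
  have hbound := le_gronwallBound_of_liminf_deriv_right_le (f := f) (f' := f') (δ := 0) (K := k)
    (ε := 0) (a := a) (b := t) (fun s hs => (hf s hs.1).continuousAt.continuousWithinAt)
    (fun s hs _ hr => (hf s hs.1).hasDerivWithinAt.liminf_right_slope_le hr) ha
    (fun s hs => by simpa using hf' s hs.1) t (right_mem_Icc.2 ht)
  simpa [gronwallBound_ε0] using hbound

/-- The polynomial `∑ aᵢ tⁱ` given by the list of its integer coefficients, constant term first;
trailing zeros are allowed. Lists make the sign conditions below decidable by evaluation. -/
abbrev CoeffList := List ℤ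

namespace CoeffList

/-- The value of the polynomial at a real number, by Horner's rule. -/
noncomputable def eval : CoeffList → ℝ → ℝ
  | [], _ => 0
  | a :: p, t => a + t * eval p t

/-- Addition of polynomials, the shorter list being padded by zeros. -/
def add : CoeffList → CoeffList → CoeffList
  | [], q => q
  | p, [] => p
  | a :: p, b :: q => (a + b) :: add p q

/-- The polynomial `p' + k p`, the factor of `exp (k * t)` in the derivative of
`p t * exp (k * t)`. -/
def twistedDeriv (k : ℤ) : CoeffList → CoeffList
  | [] => []
  | a :: p => add p ((k * a) :: twistedDeriv k p)

lemma eval_add (p q : CoeffList) (t : ℝ) : eval (add p q) t = eval p t + eval q t := by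
  fun_induction add p q with
  | case1 q => simp [eval]
  | case2 p => simp [eval]
  | case3 a p b q ih => simp only [eval, ih]; push_cast; ring

lemma hasDerivAt_eval (k : ℤ) (p : CoeffList) (t : ℝ) :
    HasDerivAt (eval p) (eval (twistedDeriv k p) t - k * eval p t) t := by
  induction p with
  | nil => simpa [twistedDeriv, eval] using hasDerivAt_const t (0 : ℝ)
  | cons a p ih =>
    refine (((hasDerivAt_id t).mul ih).const_add (a : ℝ)).congr_deriv ?_
    simp only [twistedDeriv, eval_add, eval, id]
    push_cast
    ring

lemma eval_zero (p : CoeffList) : eval p 0 = p.headD 0 := by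
  cases p <;> simp [eval]

lemma eval_nonpos {p : CoeffList} (hp : ∀ a ∈ p, a ≤ 0) {t : ℝ} (ht : 0 ≤ t) : eval p t ≤ 0 := by
  induction p with
  | nil => exact le_rfl
  | cons a p ih =>
    obtain ⟨ha, hp⟩ := List.forall_mem_cons.1 hp
    exact add_nonpos (mod_cast ha) (mul_nonpos_of_nonneg_of_nonpos ht (ih hp))

end CoeffList

/-- The exponential polynomial `∑ pₖ(t) exp (k * t)` given by the list `p₀, p₁, …` of its
polynomial coefficients. -/
abbrev ExpPoly := List CoeffList

namespace ExpPoly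

/-- The value of the exponential polynomial at a real number. -/
noncomputable def eval : ExpPoly → ℝ → ℝ
  | [], _ => 0
  | p :: Q, t => p.eval t + Real.exp t * eval Q t

/-- The value of the exponential polynomial at `0`, an integer. -/
def valueAtZero (Q : ExpPoly) : ℤ :=
  (Q.map fun p => p.headD 0).sum

/-- The exponential polynomial `Q' + k Q`. -/
def twistedDeriv : ℤ → ExpPoly → ExpPoly
  | _, [] => []
  | k, p :: Q => p.twistedDeriv k :: twistedDeriv (k + 1) Q

/-- The list `ks` certifies that `Q ≤ 0` on `[0, ∞)`: the operators `d/dt - k`, for `k` in `ks`,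
are applied one after the other, each to a function with nonpositive value at `0`, and the last
result has no positive coefficient. -/
def certifiesNonpos : List ℤ → ExpPoly → Bool
  | [], Q => Q.all fun p => p.all fun a => a ≤ 0
  | k :: ks, Q => Q.valueAtZero ≤ 0 && certifiesNonpos ks (Q.twistedDeriv (-k))

lemma hasDerivAt_eval (k : ℤ) (Q : ExpPoly) (t : ℝ) :
    HasDerivAt (eval Q) (eval (twistedDeriv k Q) t - k * eval Q t) t := by
  induction Q generalizing k with
  | nil => simpa [twistedDeriv, eval] using hasDerivAt_const t (0 : ℝ)
  | cons p Q ih =>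
    refine ((p.hasDerivAt_eval k t).add
      ((Real.hasDerivAt_exp t).mul (ih (k + 1)))).congr_deriv ?_
    simp only [twistedDeriv, eval]
    push_cast
    ring

lemma eval_zero (Q : ExpPoly) : eval Q 0 = Q.valueAtZero := by
  induction Q with
  | nil => simp [eval, valueAtZero]
  | cons p Q ih =>
    simp only [valueAtZero] at ih
    simp [eval, valueAtZero, ih, p.eval_zero]

lemma eval_nonpos {Q : ExpPoly} (hQ : ∀ p ∈ Q, ∀ a ∈ p, a ≤ 0) {t : ℝ} (ht : 0 ≤ t) :
    eval Q t ≤ 0 := by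
  induction Q with
  | nil => exact le_rfl
  | cons p Q ih =>
    obtain ⟨hp, hQ⟩ := List.forall_mem_cons.1 hQ
    exact add_nonpos (CoeffList.eval_nonpos hp ht)
      (mul_nonpos_of_nonneg_of_nonpos (Real.exp_pos t).le (ih hQ))

lemma eval_nonpos_of_certifiesNonpos {ks : List ℤ} {Q : ExpPoly}
    (h : certifiesNonpos ks Q) {t : ℝ} (ht : 0 ≤ t) : eval Q t ≤ 0 := by
  induction ks generalizing Q t with
  | nil => exact eval_nonpos (by simpa [certifiesNonpos] using h) ht
  | cons k ks ih =>
    obtain ⟨h_zero, h_deriv⟩ : Q.valueAtZero ≤ 0 ∧ certifiesNonpos ks (Q.twistedDeriv (-k)) := by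
      simpa [certifiesNonpos] using h
    refine nonpos_of_hasDerivAt_of_le_mul (k := k) (fun s _ => Q.hasDerivAt_eval (-k) s)
      (by rw [eval_zero]; exact_mod_cast h_zero) (fun s hs => ?_) ht
    have := ih h_deriv hs
    push_cast
    linarith

end ExpPoly

/-- The exponential polynomial `Q` with `τ''(c) = Q (log c) / (2 c³ (c - 1)⁴ (log c)⁴)`. -/
def tauNumerator : ExpPoly :=
  [[18, 22, 12, 4], [-84, -88, -46, -16], [156, 136, 62, 24], [-144, -100, -34, -12, 4],
    [66, 34, 6, 0, 2], [-12, -4]]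

lemma tauNumerator_eval_neg (t : ℝ) :
    tauNumerator.eval (-t) = Real.exp (-5 * t) * ExpPoly.eval
      [[-12, 4], [66, -34, 6, 0, 2], [-144, 100, -34, 12, 4], [156, -136, 62, -24],
        [-84, 88, -46, 16], [18, -22, 12, -4]] t := by
  have h_exp : Real.exp (-5 * t) = (Real.exp t ^ 5)⁻¹ := by
    rw [← Real.exp_nat_mul, ← Real.exp_neg]
    push_cast
    ring_nf
  simp only [tauNumerator, ExpPoly.eval, CoeffList.eval, h_exp, Real.exp_neg]
  field_simp
  push_cast
  ring

lemma tauNumerator_eval_nonpos (t : ℝ) : tauNumerator.eval t ≤ 0 := by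
  -- The two sequences of exponents were found by a computer search.
  rcases le_total 0 t with ht | ht
  · exact ExpPoly.eval_nonpos_of_certifiesNonpos (ks := [5, 1, 2, 3, 3, 0, 0, 0, 0, 1])
      (by decide) ht
  · rw [← neg_neg t, tauNumerator_eval_neg]
    exact mul_nonpos_of_nonneg_of_nonpos (Real.exp_pos _).le
      (ExpPoly.eval_nonpos_of_certifiesNonpos (ks := [4, 2, 2, 5, 3, 1, 1, 1, 1, 0])
        (by decide) (neg_nonneg.2 ht))

/-- The first derivative of `τ` on `(0, ∞) \ {1}`, as a polynomial in `1 / c`, `1 / log c` and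
`1 / (1 - c)`. -/
noncomputable def tauDeriv (c : ℝ) : ℝ :=
  2 * (c⁻¹ * (Real.log c)⁻¹ ^ 3) - 5 / 2 * (c⁻¹ ^ 2 * (Real.log c)⁻¹ ^ 2)
    - 3 * (c⁻¹ ^ 2 * (Real.log c)⁻¹ ^ 3) - c⁻¹ ^ 2 * (Real.log c)⁻¹
    + (1 - c)⁻¹ ^ 2 * (Real.log c)⁻¹ - c⁻¹ * (1 - c)⁻¹ * (Real.log c)⁻¹ ^ 2
    + (1 - c)⁻¹ ^ 3 - (1 - c)⁻¹ ^ 2 / 2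

section Derivatives

variable {c : ℝ}

lemma hasDerivAt_tau (hc : 0 < c) (hc1 : c ≠ 1) : HasDerivAt tau (tauDeriv c) c := by
  have h_log : Real.log c ≠ 0 := Real.log_ne_zero_of_pos_of_ne_one hc hc1
  have h_sub : 1 - c ≠ 0 := sub_ne_zero.2 hc1.symm
  have h_id := hasDerivAt_id' c
  have hL := Real.hasDerivAt_log hc.ne'
  have hs := h_id.const_sub 1
  have h₁ := ((h_id.const_mul 2).sub_const 3).fun_neg.fun_div
    ((h_id.const_mul 2).fun_mul (hL.fun_pow 2)) (by positivity)
  have h₂ := (hasDerivAt_const c (1 : ℝ)).fun_div ((h_id.fun_mul hs).fun_mul hL) (by positivity)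
  have h₃ := h_id.fun_div ((hs.fun_pow 2).const_mul 2) (by positivity)
  refine ((h₁.fun_add h₂).fun_add h₃).congr_deriv ?_
  clear h₁ h₂ h₃
  simp only [tauDeriv]
  generalize Real.log c = L at *
  field_simp
  ring

lemma hasDerivAt_tauDeriv (hc : 0 < c) (hc1 : c ≠ 1) :
    HasDerivAt tauDeriv
      (tauNumerator.eval (Real.log c) / (2 * c ^ 3 * (c - 1) ^ 4 * Real.log c ^ 4)) c := by
  have h_log : Real.log c ≠ 0 := Real.log_ne_zero_of_pos_of_ne_one hc hc1
  have h_sub : 1 - c ≠ 0 := sub_ne_zero.2 hc1.symm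
  have hu := hasDerivAt_inv hc.ne'
  have hv := (Real.hasDerivAt_log hc.ne').fun_inv h_log
  have hp := ((hasDerivAt_id' c).const_sub 1).fun_inv h_sub
  have h_uv := ((((hu.fun_mul (hv.fun_pow 3)).const_mul 2).fun_sub
    (((hu.fun_pow 2).fun_mul (hv.fun_pow 2)).const_mul (5 / 2))).fun_sub
    (((hu.fun_pow 2).fun_mul (hv.fun_pow 3)).const_mul 3)).fun_sub ((hu.fun_pow 2).fun_mul hv)
  have h_pv := (hp.fun_pow 2).fun_mul hv
  have h_upv := (hu.fun_mul hp).fun_mul (hv.fun_pow 2)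
  refine ((((h_uv.fun_add h_pv).fun_sub h_upv).fun_add (hp.fun_pow 3)).fun_sub
    ((hp.fun_pow 2).div_const 2)).congr_deriv ?_
  clear h_uv h_pv h_upv
  simp only [tauNumerator, ExpPoly.eval, CoeffList.eval, Real.exp_log hc, ← neg_sub 1 c,
    Nat.cast_ofNat, Nat.reduceSub, pow_one]
  generalize Real.log c = L at *
  field_simp
  push_cast
  ring

lemma deriv2_tau_nonpos (hc : 0 < c) (hc1 : c ≠ 1) : deriv^[2] tau c ≤ 0 := by
  have h_deriv : deriv tau =ᶠ[𝓝 c] tauDeriv := by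
    filter_upwards [lt_mem_nhds hc, eventually_ne_nhds hc1] with x hx hx1
    exact (hasDerivAt_tau hx hx1).deriv
  calc
    deriv^[2] tau c = deriv tauDeriv c := h_deriv.deriv_eq
    _ = tauNumerator.eval (Real.log c) / (2 * c ^ 3 * (c - 1) ^ 4 * Real.log c ^ 4) :=
      (hasDerivAt_tauDeriv hc hc1).deriv
    _ ≤ 0 := div_nonpos_of_nonpos_of_nonneg (tauNumerator_eval_nonpos _) (by positivity)

lemma meromorphicAt_tau (hc : 0 < c) : MeromorphicAt tau c := by
  have h_log : MeromorphicAt Real.log c := (analyticAt_log hc).meromorphicAt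
  unfold tau
  fun_prop

end Derivatives

lemma eventually_nhdsNE_pos_and_ne_one {c : ℝ} (hc : 0 < c) :
    ∀ᶠ x in 𝓝[≠] c, 0 < x ∧ x ≠ 1 := by
  refine (eventually_nhdsWithin_of_eventually_nhds (lt_mem_nhds hc)).and ?_
  rcases eq_or_ne c 1 with rfl | hc1
  · exact eventually_mem_nhdsWithin
  · exact eventually_ne_nhdsWithin hc1

section ContinuousExtension

variable {f : ℝ → ℝ}

lemma analyticOnNhd_of_eq_tau (hcont : ContinuousOn f (Ioi 0))
    (hf : ∀ c : ℝ, 0 < c → c ≠ 1 → f c = tau c) : AnalyticOnNhd ℝ f (Ioi 0) := by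
  intro c hc
  have h_eq : tau =ᶠ[𝓝[≠] c] f :=
    (eventually_nhdsNE_pos_and_ne_one hc).mono fun x hx => (hf x hx.1 hx.2).symm
  exact ((meromorphicAt_tau hc).congr h_eq).analyticAt (hcont.continuousAt (Ioi_mem_nhds hc))

lemma concaveOn_of_eq_tau (hcont : ContinuousOn f (Ioi 0))
    (hf : ∀ c : ℝ, 0 < c → c ≠ 1 → f c = tau c) : ConcaveOn ℝ (Ioi 0) f := by
  refine concaveOn_of_analyticOnNhd_of_deriv2_nonpos_nhdsNE (convex_Ioi 0)
    (analyticOnNhd_of_eq_tau hcont hf) fun c hc => Eventually.frequently ?_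
  filter_upwards [eventually_nhdsNE_pos_and_ne_one hc] with x ⟨hx, hx1⟩
  have h_eq : f =ᶠ[𝓝 x] tau := by
    filter_upwards [lt_mem_nhds hx, eventually_ne_nhds hx1] with y hy hy1
    exact hf y hy hy1
  calc
    deriv^[2] f x = deriv^[2] tau x := h_eq.deriv.deriv_eq
    _ ≤ 0 := deriv2_tau_nonpos hx hx1

end ContinuousExtension

theorem stmt_10 (f : ℝ → ℝ) (hcont : ContinuousOn f (Set.Ioi (0:ℝ)))
    (hf : ∀ c : ℝ, 0 < c → c ≠ 1 → f c = tau c) :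
    ConcaveOn ℝ (Set.Ioi (0:ℝ)) f ∧
      ∀ a b lam : ℝ, 0 < b → b < a → 0 < lam →
        MonotoneOn (fun x => f ((a - x) / lam) + f ((b + x) / lam))
          (Set.Icc (0:ℝ) ((a - b) / 2)) := by
  have h_conc := concaveOn_of_eq_tau hcont hf
  refine ⟨h_conc, fun a b lam hb hab hlam x hx y hy hxy => ?_⟩
  obtain ⟨hx0, -⟩ := hx
  obtain ⟨-, hy_mid⟩ := hy
  have h_left : (b + x) / lam ∈ Ioi 0 := div_pos (by linarith) hlam
  have h_right : (a - x) / lam ∈ Ioi 0 := div_pos (by linarith) hlam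
  have h_inner : (b + y) / lam ∈ Icc ((b + x) / lam) ((a - x) / lam) :=
    ⟨by gcongr, by gcongr; linarith⟩
  have h_sum : (b + y) / lam + (a - y) / lam = (b + x) / lam + (a - x) / lam := by ring
  have h_spread := concaveOn_add_le_add_of_add_eq_add h_conc h_left h_right h_inner h_sum
  simpa only [add_comm] using h_spread
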